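/- Suppose the primitive set ℬ ⊆ ℕ is taut. Then every finite block of η occurs in η with strictly positive frequency: for every r ∈ ℤ and n ∈ ℕ, the set {k ∈ ℕ : η(k+i) = η(r+i) for all i = 1,…,n} has strictly positive lower logarithmic density. (This is the statement that the Mirsky measure ν_η, for which η is quasi-generic, has full topological support in X_η.) -/

import Mathlib

open Filter Set Topology MeasureTheory

open scoped Classical

noncomputable section

/-- The set of multiples `M_B ⊆ ℤ` of a set `B ⊆ ℕ`. -/
def multiplesZ (B : Set ℕ) : Set ℤ := {n : ℤ | ∃ b ∈ B, (b : ℤ) ∣ n}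

/-- The `B`-free integers `F_B = ℤ ∖ M_B`. -/
def freeZ (B : Set ℕ) : Set ℤ := (multiplesZ B)ᶜ

/-- The logarithmically weighted averages `(1/log n) ∑_{k=1}^n 1_A(k)/k`. -/
def logWeight (A : Set ℤ) (n : ℕ) : ℝ :=
  (Real.log n)⁻¹ * ∑ k ∈ Finset.Icc 1 n, A.indicator (fun m : ℤ => ((m : ℝ))⁻¹) (k : ℤ)

/-- The lower logarithmic density of a set `A ⊆ ℤ`. -/
def logDensLow (A : Set ℤ) : ℝ := liminf (logWeight A) atTop

/-- `A ⊆ ℤ` has logarithmic density `d`. -/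
def HasLogDensity (A : Set ℤ) (d : ℝ) : Prop := Tendsto (logWeight A) atTop (𝓝 d)

/-- `B` is primitive: no element divides another one. -/
def Primitive (B : Set ℕ) : Prop := ∀ b ∈ B, ∀ b' ∈ B, b ∣ b' → b = b'

/-- `B` is Behrend: its set of multiples has logarithmic density one. -/
def IsBehrend (B : Set ℕ) : Prop := logDensLow (multiplesZ B) = 1

/-- `B` is taut: removing any element strictly decreases the logarithmic density
of the set of multiples. -/
def IsTaut (B : Set ℕ) : Prop :=
  ∀ b ∈ B, logDensLow (multiplesZ (B \ {b})) < logDensLow (multiplesZ B)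

/-- `B̃^(N)`: the elements of `B` having no prime factor `≤ N`. -/
def Btilde (B : Set ℕ) (N : ℕ) : Set ℕ := {b ∈ B | ∀ p : ℕ, p.Prime → p ∣ b → N < p}

/-- `B^(N)`: the elements of `B` all of whose prime factors are `≤ N`. -/
def Bsmooth (B : Set ℕ) (N : ℕ) : Set ℕ := {b ∈ B | ∀ p : ℕ, p.Prime → p ∣ b → p ≤ N}

/-!
Fix `x` and put `L = (N!) ^ 2`. If `x` is not `B`-free, some `b ∈ B` divides `x`, and as soon as
`b ≤ N` the whole class of `x` modulo `L` consists of multiples of `b`. If `x` is `B`-free and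
`|x| ≤ N`, an element `b ∈ B` dividing some `y ≡ x [ZMOD L]` factors as `b = d * a` with `d ∣ x`
and `a` coprime to `L`; so the integers of the class that fail to be `B`-free are covered by the
multiples of the sets of cofactors `{a | d * a ∈ B}`, `d ∣ x`, with all prime factors above `N`.

Tautness makes each of these sets of cofactors non-Behrend: `d ∉ B` because `x` is free, and if
`{a | d * a ∈ B}` were Behrend, it would remain so without one of its elements `a`, and removing
`d * a` from `B` would not change the density of the multiples of `B`. For a non-Behrend set `A`,
the density of the multiples of the elements with no prime factor up to `N` tends to zero: a
finite `S ⊆ A` is coprime to these elements for large `N`, so the densities of the non-multiples of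
both multiply, and those of `S` approach the positive density of the non-multiples of `A`.

Since `a` is coprime to `L`, the class modulo `L` and the multiples of the cofactors are
independent, so the bad part of the class has upper density `o(1 / L)`. For large `N` a positive
proportion of the class of `r` modulo `L` therefore reproduces the block at `r`.

Passing from finite to infinite sets of multiples, inside a residue class as well, rests on the
Davenport–Erdős argument: the smooth multiples have an exact Euler-product density, and Mertens'
bound `∏ p ≤ n, (1 - 1 / p)⁻¹ = O(log n)` transfers it to the logarithmic averages up to `n`.
-/

/-! ### Mertens' upper bound for the Euler product -/

theorem log_factorial_eq_sum_primesLE (n : ℕ) :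
    Real.log n.factorial =
      ∑ p ∈ n.primesLE, (n.factorial.factorization p : ℝ) * Real.log p := by
  rw [Real.log_nat_eq_sum_factorization, Finsupp.sum_of_support_subset _ _ _ (by simp)]
  intro p hp
  obtain ⟨hp, hdvd, -⟩ := by simpa only [Nat.support_factorization, Nat.mem_primeFactors] using hp
  exact Nat.mem_primesLE.2 ⟨hp.dvd_factorial.1 hdvd, hp⟩

theorem div_le_factorization_factorial_add_one {n p : ℕ} (hp : p.Prime) (hpn : p ≤ n) :
    (n / p : ℝ) ≤ n.factorial.factorization p + 1 := by
  have hfloor : n / p ≤ n.factorial.factorization p := by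
    rw [Nat.factorization_factorial hp (Nat.lt_succ_self _)]
    calc n / p = n / p ^ 1 := by rw [pow_one]
      _ ≤ ∑ i ∈ Finset.Ico 1 (Nat.log p n + 1), n / p ^ i :=
        Finset.single_le_sum (f := fun i => n / p ^ i) (fun _ _ => Nat.zero_le _)
          (Finset.mem_Ico.2 ⟨le_rfl, Nat.succ_lt_succ (Nat.log_pos hp.one_lt hpn)⟩)
  calc (n / p : ℝ) ≤ (n / p : ℕ) + 1 := by
        rw [← Nat.floor_div_eq_div (K := ℝ)]; exact (Nat.lt_floor_add_one _).le
    _ ≤ n.factorial.factorization p + 1 := by gcongr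

theorem sum_primesLE_log_div_le (n : ℕ) :
    ∑ p ∈ n.primesLE, Real.log p / p ≤ Real.log n + Real.log 4 := by
  obtain rfl | hn := Nat.eq_zero_or_pos n
  · simpa using Real.log_nonneg (by norm_num)
  have hmul : n * ∑ p ∈ n.primesLE, Real.log p / p ≤ n * (Real.log n + Real.log 4) :=
    calc n * ∑ p ∈ n.primesLE, Real.log p / p
        = ∑ p ∈ n.primesLE, n / p * Real.log p := by
          rw [Finset.mul_sum]; exact Finset.sum_congr rfl fun p _ => by ring
      _ ≤ ∑ p ∈ n.primesLE, (n.factorial.factorization p + 1) * Real.log p := by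
          refine Finset.sum_le_sum fun p hp =>
            mul_le_mul_of_nonneg_right ?_ (Real.log_natCast_nonneg p)
          obtain ⟨hpn, hp⟩ := Nat.mem_primesLE.1 hp
          exact div_le_factorization_factorial_add_one hp hpn
      _ = Real.log n.factorial + Chebyshev.theta n := by
          rw [log_factorial_eq_sum_primesLE, Chebyshev.theta_eq_sum_primesLE_log,
            ← Finset.sum_add_distrib]
          simp only [add_mul, one_mul]
      _ ≤ n * Real.log n + Real.log 4 * n := by
          refine add_le_add ?_ (Chebyshev.theta_le_log4_mul_x n.cast_nonneg)
          rw [← Real.log_pow]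
          exact Real.log_le_log (mod_cast n.factorial_pos) (mod_cast n.factorial_le_pow)
      _ = n * (Real.log n + Real.log 4) := by ring
  exact le_of_mul_le_mul_left hmul (mod_cast hn)

theorem one_sub_rpow_le_mul_exp {p t : ℝ} (hp : 2 ≤ p) (ht : 0 ≤ t) :
    1 - p ^ (-(1 + t)) ≤ (1 - p⁻¹) * Real.exp (2 * t * (Real.log p / p)) := by
  have hp0 : 0 < p := by linarith
  have hlog : 0 ≤ Real.log p := Real.log_nonneg (by linarith)
  have hinv : p⁻¹ ≤ 2⁻¹ := inv_anti₀ two_pos hp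
  have hrpow : p⁻¹ * (1 - t * Real.log p) ≤ p ^ (-(1 + t)) := by
    rw [neg_add, Real.rpow_add hp0, Real.rpow_neg_one, Real.rpow_def_of_pos hp0]
    gcongr
    linarith [Real.add_one_le_exp (Real.log p * -t)]
  have hexp := Real.add_one_le_exp (2 * t * (Real.log p / p))
  have hfrac : 0 ≤ t * (Real.log p / p) := by positivity
  calc 1 - p ^ (-(1 + t)) ≤ (1 - p⁻¹) + t * (Real.log p / p) := by
        linear_combination hrpow
    _ ≤ (1 - p⁻¹) * (2 * t * (Real.log p / p) + 1) := by nlinarith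
    _ ≤ (1 - p⁻¹) * Real.exp (2 * t * (Real.log p / p)) := by gcongr; linarith

theorem prod_primesBelow_one_sub_rpow_inv_le_tsum {s : ℝ} (hs : 1 < s) (N : ℕ) :
    ∏ p ∈ N.primesBelow, (1 - (p : ℝ) ^ (-s))⁻¹ ≤ ∑' k : ℕ, 1 / (k : ℝ) ^ s := by
  let f : ℕ →* ℝ :=
    { toFun := fun k => (k : ℝ) ^ (-s)
      map_one' := by simp
      map_mul' := fun a b => by
        rw [Nat.cast_mul, Real.mul_rpow a.cast_nonneg b.cast_nonneg] }
  have hf (k : ℕ) : f k = 1 / (k : ℝ) ^ s := by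
    rw [one_div, ← Real.rpow_neg k.cast_nonneg]; rfl
  have hsum : Summable f := (Real.summable_one_div_nat_rpow.2 hs).congr fun k => (hf k).symm
  calc ∏ p ∈ N.primesBelow, (1 - (p : ℝ) ^ (-s))⁻¹ = ∑' k : N.smoothNumbers, f k :=
        EulerProduct.prod_primesBelow_geometric_eq_tsum_smoothNumbers hsum N
    _ ≤ ∑' k : ℕ, f k :=
        Summable.tsum_subtype_le f _ (fun k => by rw [hf]; positivity) hsum
    _ = ∑' k : ℕ, 1 / (k : ℝ) ^ s := tsum_congr hf

-- Comparing the exponents `1` and `1 + 1 / log n` costs only a bounded factor, because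
-- `∑ p ≤ n, log p / p` is `O(log n)`.
theorem prod_primesLE_inv_le (n : ℕ) {t : ℝ} (ht : 0 < t) :
    ∏ p ∈ n.primesLE, (1 - (p : ℝ)⁻¹)⁻¹ ≤
      Real.exp (2 * t * (Real.log n + Real.log 4)) * ∑' k : ℕ, 1 / (k : ℝ) ^ (1 + t) := by
  have hfactor (p : ℕ) (hp : p ∈ n.primesLE) : (1 - (p : ℝ)⁻¹)⁻¹ ≤
      Real.exp (2 * t * (Real.log p / p)) * (1 - (p : ℝ) ^ (-(1 + t)))⁻¹ := by
    have hp2 : (2 : ℝ) ≤ p := mod_cast (Nat.mem_primesLE.1 hp).2.two_le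
    have hle := one_sub_rpow_le_mul_exp hp2 ht.le
    have hinv : (p : ℝ)⁻¹ < 1 := inv_lt_one_of_one_lt₀ (by linarith)
    have hpos : (p : ℝ) ^ (-(1 + t)) < 1 :=
      Real.rpow_lt_one_of_one_lt_of_neg (by linarith) (by linarith)
    rw [← div_eq_mul_inv, le_div_iff₀ (by linarith), inv_mul_le_iff₀ (by linarith)]
    exact hle
  calc ∏ p ∈ n.primesLE, (1 - (p : ℝ)⁻¹)⁻¹
      ≤ ∏ p ∈ n.primesLE, Real.exp (2 * t * (Real.log p / p)) * (1 - (p : ℝ) ^ (-(1 + t)))⁻¹ :=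
        Finset.prod_le_prod
          (fun p _ => inv_nonneg.2 (sub_nonneg.2 p.cast_inv_le_one)) hfactor
    _ = Real.exp (2 * t * ∑ p ∈ n.primesLE, Real.log p / p) *
          ∏ p ∈ n.primesLE, (1 - (p : ℝ) ^ (-(1 + t)))⁻¹ := by
        rw [Finset.prod_mul_distrib, ← Real.exp_sum, Finset.mul_sum]
    _ ≤ Real.exp (2 * t * ∑ p ∈ n.primesLE, Real.log p / p) *
          ∑' k : ℕ, 1 / (k : ℝ) ^ (1 + t) := by
        gcongr
        exact prod_primesBelow_one_sub_rpow_inv_le_tsum (lt_add_of_pos_right 1 ht) _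
    _ ≤ Real.exp (2 * t * (Real.log n + Real.log 4)) * ∑' k : ℕ, 1 / (k : ℝ) ^ (1 + t) := by
        gcongr
        exact sum_primesLE_log_div_le n

theorem tendsto_log_natCast_atTop : Tendsto (fun n : ℕ => Real.log n) atTop atTop :=
  Real.tendsto_log_atTop.comp tendsto_natCast_atTop_atTop

theorem exists_prod_primesLE_inv_le_mul_log :
    ∃ C : ℝ, ∀ᶠ n : ℕ in atTop, ∏ p ∈ n.primesLE, (1 - (p : ℝ)⁻¹)⁻¹ ≤ C * Real.log n := by
  have hexponent : Tendsto (fun n : ℕ => 1 + (Real.log n)⁻¹) atTop (𝓝[>] 1) := by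
    refine tendsto_nhdsWithin_iff.2 ⟨?_, ?_⟩
    · simpa using tendsto_log_natCast_atTop.inv_tendsto_atTop.const_add 1
    · filter_upwards [tendsto_log_natCast_atTop.eventually_gt_atTop 0] with n hn
      exact lt_add_of_pos_right 1 (inv_pos.2 hn)
  have hzeta := (tendsto_sub_mul_tsum_nat_rpow.comp hexponent).eventually_le_const one_lt_two
  refine ⟨Real.exp 4 * 2, ?_⟩
  filter_upwards [hzeta, tendsto_log_natCast_atTop.eventually_ge_atTop (Real.log 4)] with n hz hn
  have hlog : 0 < Real.log n := (Real.log_pos (by norm_num)).trans_le hn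
  simp only [Function.comp_apply, add_sub_cancel_left] at hz
  calc ∏ p ∈ n.primesLE, (1 - (p : ℝ)⁻¹)⁻¹
      ≤ Real.exp (2 * (Real.log n)⁻¹ * (Real.log n + Real.log 4)) *
          ∑' k : ℕ, 1 / (k : ℝ) ^ (1 + (Real.log n)⁻¹) := prod_primesLE_inv_le n (inv_pos.2 hlog)
    _ ≤ Real.exp (2 * (Real.log n)⁻¹ * (Real.log n + Real.log n)) * (2 * Real.log n) := by
        gcongr
        rwa [inv_mul_le_iff₀ hlog, mul_comm] at hz
    _ = Real.exp 4 * 2 * Real.log n := by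
        rw [show 2 * (Real.log n)⁻¹ * (Real.log n + Real.log n) = 4 by field_simp; norm_num]
        ring

/-! ### Logarithmic densities -/

/-- The upper logarithmic density of a set `A ⊆ ℤ`. -/
def logDensUp (A : Set ℤ) : ℝ := limsup (logWeight A) atTop

theorem logWeight_nonneg (A : Set ℤ) (n : ℕ) : 0 ≤ logWeight A n :=
  mul_nonneg (inv_nonneg.2 (Real.log_natCast_nonneg n)) <| Finset.sum_nonneg fun k _ =>
    indicator_apply_nonneg fun _ => by positivity

theorem logWeight_le_of_forall_le {A A' : Set ℤ} {n : ℕ}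
    (h : ∀ k : ℕ, 0 < k → k ≤ n → (k : ℤ) ∈ A → (k : ℤ) ∈ A') : logWeight A n ≤ logWeight A' n := by
  refine mul_le_mul_of_nonneg_left (Finset.sum_le_sum fun k hk => ?_)
    (inv_nonneg.2 (Real.log_natCast_nonneg n))
  obtain ⟨hk, hkn⟩ := Finset.mem_Icc.1 hk
  refine indicator_apply_le' (fun hkA => ?_) fun _ => indicator_apply_nonneg fun _ => by positivity
  rw [indicator_of_mem (h k hk hkn hkA)]

theorem logWeight_mono {A A' : Set ℤ} (h : A ⊆ A') (n : ℕ) : logWeight A n ≤ logWeight A' n :=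
  logWeight_le_of_forall_le fun _ _ _ hk => h hk

theorem logWeight_empty (n : ℕ) : logWeight ∅ n = 0 := by
  simp [logWeight]

theorem logWeight_union_add_inter (A A' : Set ℤ) (n : ℕ) :
    logWeight (A ∪ A') n + logWeight (A ∩ A') n = logWeight A n + logWeight A' n := by
  simp only [logWeight, ← mul_add, ← Finset.sum_add_distrib, indicator_union_add_inter_apply]

theorem logWeight_union_le (A A' : Set ℤ) (n : ℕ) :
    logWeight (A ∪ A') n ≤ logWeight A n + logWeight A' n := by
  linarith [logWeight_union_add_inter A A' n, logWeight_nonneg (A ∩ A') n]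

theorem logWeight_union_of_disjoint {A A' : Set ℤ} (h : Disjoint A A') (n : ℕ) :
    logWeight (A ∪ A') n = logWeight A n + logWeight A' n := by
  rw [← logWeight_union_add_inter, h.inter_eq, logWeight_empty, add_zero]

theorem logWeight_sdiff_of_subset {A A' : Set ℤ} (h : A' ⊆ A) (n : ℕ) :
    logWeight (A \ A') n = logWeight A n - logWeight A' n := by
  rw [eq_sub_iff_add_eq, ← logWeight_union_of_disjoint disjoint_sdiff_left,
    sdiff_union_of_subset h]

theorem logWeight_eq_sum_filter (A : Set ℤ) (n : ℕ) :
    logWeight A n = (Real.log n)⁻¹ * ∑ k ∈ Finset.Icc 1 n with ((k : ℕ) : ℤ) ∈ A, (k : ℝ)⁻¹ := by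
  rw [logWeight, Finset.sum_filter]
  simp only [indicator_apply, Int.cast_natCast]

theorem hasLogDensity_empty : HasLogDensity ∅ 0 :=
  tendsto_const_nhds.congr fun n => (logWeight_empty n).symm

theorem hasLogDensity_univ : HasLogDensity univ 1 := by
  have hgamma : Tendsto (fun n : ℕ => (Real.log n)⁻¹ * (harmonic n - Real.log n) + 1)
      atTop (𝓝 1) := by
    simpa using
      (tendsto_log_natCast_atTop.inv_tendsto_atTop.mul Real.tendsto_harmonic_sub_log).add_const 1
  refine hgamma.congr' ?_
  filter_upwards [tendsto_log_natCast_atTop.eventually_gt_atTop 0] with n hn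
  simp only [logWeight, indicator_univ, Int.cast_natCast, harmonic_eq_sum_Icc, Rat.cast_sum,
    Rat.cast_inv, Rat.cast_natCast]
  field_simp
  ring

theorem isBoundedUnder_le_logWeight (A : Set ℤ) :
    IsBoundedUnder (· ≤ ·) atTop (logWeight A) :=
  hasLogDensity_univ.isBoundedUnder_le.mono_le (.of_forall (logWeight_mono (subset_univ A)))

theorem isBoundedUnder_ge_logWeight (A : Set ℤ) :
    IsBoundedUnder (· ≥ ·) atTop (logWeight A) :=
  isBoundedUnder_of ⟨0, logWeight_nonneg A⟩

theorem logDensLow_le_logDensUp (A : Set ℤ) : logDensLow A ≤ logDensUp A :=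
  liminf_le_limsup (isBoundedUnder_le_logWeight A) (isBoundedUnder_ge_logWeight A)

theorem logDensLow_nonneg (A : Set ℤ) : 0 ≤ logDensLow A :=
  le_liminf_of_le (isBoundedUnder_le_logWeight A).isCoboundedUnder_ge
    (.of_forall (logWeight_nonneg A))

theorem logDensLow_mono_of_pos {A A' : Set ℤ} (h : ∀ k : ℤ, 0 < k → k ∈ A → k ∈ A') :
    logDensLow A ≤ logDensLow A' :=
  liminf_le_liminf
    (.of_forall fun _ => logWeight_le_of_forall_le fun k hk _ => h k (mod_cast hk))
    (isBoundedUnder_ge_logWeight A) (isBoundedUnder_le_logWeight A').isCoboundedUnder_ge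

theorem logDensLow_mono {A A' : Set ℤ} (h : A ⊆ A') : logDensLow A ≤ logDensLow A' :=
  logDensLow_mono_of_pos fun _ _ hk => h hk

theorem logDensUp_mono {A A' : Set ℤ} (h : A ⊆ A') : logDensUp A ≤ logDensUp A' :=
  limsup_le_limsup (.of_forall (logWeight_mono h))
    (isBoundedUnder_ge_logWeight A).isCoboundedUnder_le (isBoundedUnder_le_logWeight A')

theorem logDensUp_union_le (A A' : Set ℤ) : logDensUp (A ∪ A') ≤ logDensUp A + logDensUp A' :=
  calc logDensUp (A ∪ A') ≤ limsup (logWeight A + logWeight A') atTop :=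
        limsup_le_limsup (.of_forall (logWeight_union_le A A'))
          (isBoundedUnder_ge_logWeight _).isCoboundedUnder_le
          (isBoundedUnder_le_add (isBoundedUnder_le_logWeight A) (isBoundedUnder_le_logWeight A'))
    _ ≤ logDensUp A + logDensUp A' :=
        limsup_add_le (isBoundedUnder_ge_logWeight A) (isBoundedUnder_le_logWeight A)
          (isBoundedUnder_ge_logWeight A').isCoboundedUnder_le (isBoundedUnder_le_logWeight A')

theorem logDensLow_union_le (A A' : Set ℤ) : logDensLow (A ∪ A') ≤ logDensLow A + logDensUp A' :=
  calc logDensLow (A ∪ A') ≤ liminf (logWeight A' + logWeight A) atTop :=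
        liminf_le_liminf (.of_forall fun n => (logWeight_union_le A A' n).trans_eq (add_comm _ _))
          (isBoundedUnder_ge_logWeight _)
          (isBoundedUnder_le_add (isBoundedUnder_le_logWeight A')
            (isBoundedUnder_le_logWeight A)).isCoboundedUnder_ge
    _ ≤ logDensUp A' + logDensLow A :=
        liminf_add_le (isBoundedUnder_ge_logWeight A') (isBoundedUnder_le_logWeight A')
          (isBoundedUnder_ge_logWeight A) (isBoundedUnder_le_logWeight A).isCoboundedUnder_ge
    _ = logDensLow A + logDensUp A' := add_comm _ _

namespace HasLogDensity

variable {A A' : Set ℤ} {d d' : ℝ}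

theorem logDensLow_eq (h : HasLogDensity A d) : logDensLow A = d :=
  h.liminf_eq

theorem logDensUp_eq (h : HasLogDensity A d) : logDensUp A = d :=
  h.limsup_eq

theorem sdiff (h : HasLogDensity A d) (h' : HasLogDensity A' d') (hsub : A' ⊆ A) :
    HasLogDensity (A \ A') (d - d') :=
  (Tendsto.sub h h').congr fun n => (logWeight_sdiff_of_subset hsub n).symm

theorem compl (h : HasLogDensity A d) : HasLogDensity Aᶜ (1 - d) := by
  simpa only [compl_eq_univ_sdiff] using hasLogDensity_univ.sdiff h (subset_univ A)

theorem union (h : HasLogDensity A d) (h' : HasLogDensity A' d') {e : ℝ}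
    (hinter : HasLogDensity (A ∩ A') e) : HasLogDensity (A ∪ A') (d + d' - e) :=
  ((Tendsto.add h h').sub hinter).congr fun n => by
    rw [← logWeight_union_add_inter, add_sub_cancel_right]

end HasLogDensity

theorem logDensUp_empty : logDensUp ∅ = 0 :=
  hasLogDensity_empty.logDensUp_eq

theorem logDensUp_biUnion_le {ι : Type*} (s : Finset ι) (A : ι → Set ℤ) :
    logDensUp (⋃ i ∈ s, A i) ≤ ∑ i ∈ s, logDensUp (A i) := by
  induction s using Finset.cons_induction with
  | empty => simp [logDensUp_empty]
  | cons i s hi ih =>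
    rw [Finset.sum_cons, Finset.cons_eq_insert, Finset.set_biUnion_insert]
    exact (logDensUp_union_le _ _).trans (add_le_add_right ih _)

theorem logDensLow_le_add_sum_logDensUp {ι : Type*} {A G : Set ℤ} {s : Finset ι}
    {E : ι → Set ℤ} (h : A ⊆ G ∪ ⋃ i ∈ s, E i) :
    logDensLow A ≤ logDensLow G + ∑ i ∈ s, logDensUp (E i) :=
  (logDensLow_mono h).trans ((logDensLow_union_le _ _).trans
    (add_le_add_right (logDensUp_biUnion_le s E) _))

theorem logDensLow_le_one (A : Set ℤ) : logDensLow A ≤ 1 :=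
  (logDensLow_mono (subset_univ A)).trans_eq hasLogDensity_univ.logDensLow_eq

theorem abs_sum_shift_mul_inv_sub_le {f : ℕ → ℝ} (hf0 : ∀ k, 0 ≤ f k) (hf1 : ∀ k, f k ≤ 1)
    (n : ℕ) : |∑ k ∈ Finset.Icc 1 n, (f (k + 1) * (k : ℝ)⁻¹ - f k * (k : ℝ)⁻¹)| ≤ 1 := by
  have htelescope : f (n + 1) * (n + 1 : ℝ)⁻¹ - f 1 ≤
        ∑ k ∈ Finset.Icc 1 n, (f (k + 1) * (k : ℝ)⁻¹ - f k * (k : ℝ)⁻¹) ∧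
      ∑ k ∈ Finset.Icc 1 n, (f (k + 1) * (k : ℝ)⁻¹ - f k * (k : ℝ)⁻¹) ≤
        f (n + 1) * (n + 1 : ℝ)⁻¹ - f 1 + (1 - (n + 1 : ℝ)⁻¹) := by
    induction n with
    | zero => simp
    | succ n ih =>
      have hinv : (n + 1 + 1 : ℝ)⁻¹ ≤ (n + 1 : ℝ)⁻¹ := by gcongr; linarith
      rw [Finset.sum_Icc_succ_top (by omega)]
      push_cast
      constructor <;> nlinarith [hf0 (n + 1 + 1), hf1 (n + 1 + 1)]
  have hnonneg : 0 ≤ f (n + 1) * (n + 1 : ℝ)⁻¹ := mul_nonneg (hf0 _) (by positivity)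
  have hle : f (n + 1) * (n + 1 : ℝ)⁻¹ ≤ (n + 1 : ℝ)⁻¹ :=
    mul_le_of_le_one_left (by positivity) (hf1 _)
  exact abs_le.2 ⟨by linarith [hf1 1], by linarith [hf0 1]⟩

theorem tendsto_logWeight_shift_one_sub (A : Set ℤ) :
    Tendsto (fun n => logWeight {k | k + 1 ∈ A} n - logWeight A n) atTop (𝓝 0) := by
  let f (k : ℕ) : ℝ := A.indicator 1 (k : ℤ)
  have hf0 (k : ℕ) : 0 ≤ f k := indicator_apply_nonneg fun _ => zero_le_one
  have hf1 (k : ℕ) : f k ≤ 1 := indicator_apply_le' (fun _ => le_rfl) fun _ => zero_le_one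
  refine squeeze_zero_norm (fun n => ?_) tendsto_log_natCast_atTop.inv_tendsto_atTop
  have heq : logWeight {k | k + 1 ∈ A} n - logWeight A n = (Real.log n)⁻¹ *
      ∑ k ∈ Finset.Icc 1 n, (f (k + 1) * (k : ℝ)⁻¹ - f k * (k : ℝ)⁻¹) := by
    simp only [logWeight, ← mul_sub, ← Finset.sum_sub_distrib, f, indicator_apply, mem_ofPred_eq,
      Pi.one_apply, ite_mul, one_mul, zero_mul, Nat.cast_add, Nat.cast_one, Int.cast_natCast]
  have hlog : 0 ≤ (Real.log n)⁻¹ := inv_nonneg.2 (Real.log_natCast_nonneg n)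
  rw [heq, norm_mul, Real.norm_of_nonneg hlog]
  exact mul_le_of_le_one_right hlog (abs_sum_shift_mul_inv_sub_le hf0 hf1 n)

theorem tendsto_logWeight_shift_sub (A : Set ℤ) (t : ℤ) :
    Tendsto (fun n => logWeight {k | k + t ∈ A} n - logWeight A n) atTop (𝓝 0) := by
  have hstep (t : ℤ) : Tendsto (fun n => logWeight {k | k + (t + 1) ∈ A} n -
      logWeight {k | k + t ∈ A} n) atTop (𝓝 0) := by
    simpa only [mem_ofPred_eq, add_assoc, add_comm (1 : ℤ)] using
      tendsto_logWeight_shift_one_sub {k | k + t ∈ A}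
  induction t using Int.induction_on with
  | zero => simp
  | succ t ih => simpa using (hstep t).add ih
  | pred t ih => simpa using ih.sub (hstep (-t - 1))

theorem logDensUp_shift (A : Set ℤ) (t : ℤ) : logDensUp {k | k + t ∈ A} = logDensUp A := by
  have hle (A : Set ℤ) (t : ℤ) : logDensUp {k | k + t ∈ A} ≤ logDensUp A :=
    calc logDensUp {k | k + t ∈ A}
        = limsup ((fun n => logWeight {k | k + t ∈ A} n - logWeight A n) + logWeight A) atTop := by
          simp only [logDensUp, Pi.add_def, sub_add_cancel]
      _ ≤ 0 + logDensUp A := by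
          have h := tendsto_logWeight_shift_sub A t
          rw [← h.limsup_eq]
          exact limsup_add_le h.isBoundedUnder_ge h.isBoundedUnder_le
            (isBoundedUnder_ge_logWeight A).isCoboundedUnder_le (isBoundedUnder_le_logWeight A)
      _ = logDensUp A := zero_add _
  refine (hle A t).antisymm ?_
  simpa [add_assoc] using hle {k | k + t ∈ A} (-t)

theorem sum_logWeight_modEq {L : ℕ} (hL : 0 < L) (n : ℕ) :
    ∑ c ∈ Finset.range L, logWeight {k | k ≡ c [ZMOD L]} n = logWeight univ n := by
  have hresidue (k c : ℕ) (hc : c < L) : (k : ℤ) ≡ c [ZMOD L] ↔ k % L = c := by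
    rw [Int.natCast_modEq_iff, Nat.ModEq, Nat.mod_eq_of_lt hc]
  simp only [logWeight, ← Finset.mul_sum, indicator_apply, mem_ofPred_eq, mem_univ, if_true]
  rw [Finset.sum_comm]
  congr 1
  refine Finset.sum_congr rfl fun k _ => ?_
  rw [Finset.sum_eq_single_of_mem (k % L) (Finset.mem_range.2 (Nat.mod_lt k hL))]
  · exact if_pos ((hresidue k _ (Nat.mod_lt k hL)).2 rfl)
  · exact fun c hc hne =>
      if_neg fun hk => hne ((hresidue k c (Finset.mem_range.1 hc)).1 hk).symm

theorem tendsto_logWeight_modEq_sub_dvd (L : ℕ) (s : ℤ) :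
    Tendsto (fun n => logWeight {k | k ≡ s [ZMOD L]} n - logWeight {k | (L : ℤ) ∣ k} n)
      atTop (𝓝 0) := by
  simpa only [mem_ofPred_eq, ← sub_eq_add_neg, ← Int.modEq_iff_dvd, Int.modEq_comm (a := s)] using
    tendsto_logWeight_shift_sub {k | (L : ℤ) ∣ k} (-s)

-- The case `m = 0` holds because no positive integer is a multiple of `0` and `1 / 0 = 0`.
theorem hasLogDensity_dvd (m : ℕ) : HasLogDensity {k | (m : ℤ) ∣ k} (1 / m) := by
  obtain rfl | hm := Nat.eq_zero_or_pos m
  · rw [Nat.cast_zero, Nat.cast_zero, div_zero]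
    refine hasLogDensity_empty.congr fun n => (logWeight_mono (empty_subset _) n).antisymm ?_
    exact logWeight_le_of_forall_le fun k hk _ hdvd =>
      (hk.ne' (by simpa using hdvd)).elim
  · have hsum := tendsto_finsetSum (Finset.range m) fun c _ => tendsto_logWeight_modEq_sub_dvd m c
    have h := (Tendsto.sub hasLogDensity_univ hsum).const_mul (1 / m : ℝ)
    rw [Finset.sum_const_zero, sub_zero, mul_one] at h
    refine h.congr fun n => ?_
    rw [Finset.sum_sub_distrib, sum_logWeight_modEq hm, Finset.sum_const, Finset.card_range]
    field_simp
    simp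

theorem hasLogDensity_modEq (L : ℕ) (s : ℤ) : HasLogDensity {k | k ≡ s [ZMOD L]} (1 / L) := by
  simpa [HasLogDensity] using
    (tendsto_logWeight_modEq_sub_dvd L s).add (hasLogDensity_dvd L)

theorem logWeight_image_mul_le {a : ℕ} (ha : 0 < a) (A : Set ℤ) (n : ℕ) :
    logWeight ((a * ·) '' A) n ≤ 1 / a * logWeight A n := by
  have hsub : {k ∈ Finset.Icc 1 n | ((k : ℕ) : ℤ) ∈ ((a : ℤ) * ·) '' A} ⊆
      {m ∈ Finset.Icc 1 n | ((m : ℕ) : ℤ) ∈ A}.image (a * ·) := by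
    intro k hk
    obtain ⟨hk, z, hz, hzk : (a : ℤ) * z = k⟩ := by
      simpa only [Finset.mem_filter, Finset.mem_Icc] using hk
    have hz0 : 0 < z := pos_of_mul_pos_right (hzk ▸ mod_cast hk.1) a.cast_nonneg
    lift z to ℕ using hz0.le
    have hzk : a * z = k := mod_cast hzk
    have hzn : z ≤ n := (Nat.le_mul_of_pos_left z ha).trans (hzk ▸ hk.2)
    exact Finset.mem_image.2
      ⟨z, Finset.mem_filter.2 ⟨Finset.mem_Icc.2 ⟨mod_cast hz0, hzn⟩, hz⟩, hzk⟩
  rw [logWeight_eq_sum_filter, logWeight_eq_sum_filter, mul_left_comm]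
  refine mul_le_mul_of_nonneg_left ?_ (inv_nonneg.2 (Real.log_natCast_nonneg n))
  refine (Finset.sum_le_sum_of_subset_of_nonneg hsub fun k _ _ => by positivity).trans_eq ?_
  rw [Finset.mul_sum, Finset.sum_image fun _ _ _ _ h => Nat.eq_of_mul_eq_mul_left ha h]
  exact Finset.sum_congr rfl fun k _ => by rw [Nat.cast_mul, mul_inv, one_div]

/-! ### Multiples of finite sets -/

/-- The density of the set of multiples of a finite set `S`, computed by inclusion–exclusion:
`⋂_{b ∈ T} bℤ` is the set of multiples of `lcm T`. -/
def multiplesDensity (S : Finset ℕ) : ℝ :=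
  ∑ T ∈ S.powerset with T.Nonempty, (-1) ^ (T.card + 1) * (1 / (T.lcm id : ℕ))

theorem multiplesZ_mono {A A' : Set ℕ} (h : A ⊆ A') : multiplesZ A ⊆ multiplesZ A' :=
  fun _ ⟨b, hb, hdvd⟩ => ⟨b, h hb, hdvd⟩

theorem multiplesZ_union (A A' : Set ℕ) : multiplesZ (A ∪ A') = multiplesZ A ∪ multiplesZ A' := by
  ext k
  simp only [multiplesZ, mem_ofPred_eq, mem_union, or_and_right, exists_or]

theorem indicator_multiplesZ (S : Finset ℕ) (f : ℤ → ℝ) (k : ℤ) :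
    (multiplesZ S).indicator f k = ∑ T ∈ S.powerset with T.Nonempty,
      (-1) ^ (T.card + 1) * {k : ℤ | ((T.lcm id : ℕ) : ℤ) ∣ k}.indicator f k := by
  have hunion : multiplesZ S = ⋃ b ∈ S, {k : ℤ | (b : ℤ) ∣ k} := by
    ext k
    simp only [multiplesZ, Finset.mem_coe, mem_ofPred_eq, mem_iUnion, exists_prop]
  have hinter (T : Finset ℕ) :
      ⋂ b ∈ T, {k : ℤ | (b : ℤ) ∣ k} = {k : ℤ | ((T.lcm id : ℕ) : ℤ) ∣ k} := by
    ext k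
    simp only [mem_iInter, mem_ofPred_eq, Int.natCast_dvd, Finset.lcm_dvd_iff, id]
  rw [hunion, Finset.indicator_biUnion_eq_sum_powerset]
  simp only [hinter, zsmul_eq_mul, Int.cast_pow, Int.cast_neg, Int.cast_one]

theorem logWeight_multiplesZ_inter (S : Finset ℕ) (E : Set ℤ) (n : ℕ) :
    logWeight (multiplesZ S ∩ E) n = ∑ T ∈ S.powerset with T.Nonempty,
      (-1) ^ (T.card + 1) * logWeight ({k : ℤ | ((T.lcm id : ℕ) : ℤ) ∣ k} ∩ E) n := by
  simp only [logWeight, ← indicator_indicator, indicator_multiplesZ, Finset.mul_sum]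
  rw [Finset.sum_comm]
  exact Finset.sum_congr rfl fun T _ => Finset.sum_congr rfl fun k _ => mul_left_comm _ _ _

theorem hasLogDensity_multiplesZ_inter {S : Finset ℕ} {E : Set ℤ} {e : ℝ}
    (h : ∀ T ⊆ S, HasLogDensity ({k : ℤ | ((T.lcm id : ℕ) : ℤ) ∣ k} ∩ E) (1 / (T.lcm id : ℕ) * e)) :
    HasLogDensity (multiplesZ S ∩ E) (multiplesDensity S * e) := by
  rw [multiplesDensity, Finset.sum_mul]
  simp only [mul_assoc]
  refine (tendsto_finsetSum _ fun T hT => ?_).congr fun n =>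
    (logWeight_multiplesZ_inter S E n).symm
  exact (h T (Finset.mem_powerset.1 (Finset.mem_filter.1 hT).1)).const_mul _

theorem hasLogDensity_multiplesZ_finset (S : Finset ℕ) :
    HasLogDensity (multiplesZ S) (multiplesDensity S) := by
  simpa only [inter_univ, mul_one] using
    hasLogDensity_multiplesZ_inter (S := S) (E := univ) (e := 1) fun T _ => by
      simpa only [inter_univ, mul_one] using hasLogDensity_dvd (T.lcm id)

theorem logDensLow_multiplesZ_finset (S : Finset ℕ) :
    logDensLow (multiplesZ S) = multiplesDensity S :=
  (hasLogDensity_multiplesZ_finset S).logDensLow_eq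

theorem multiplesDensity_le_logDensLow {S : Finset ℕ} {A : Set ℕ} (h : (S : Set ℕ) ⊆ A) :
    multiplesDensity S ≤ logDensLow (multiplesZ A) :=
  logDensLow_multiplesZ_finset S ▸ logDensLow_mono (multiplesZ_mono h)

theorem coprime_lcm_left {S : Finset ℕ} {m : ℕ} (h : ∀ b ∈ S, b.Coprime m) :
    (S.lcm id).Coprime m :=
  (Nat.Coprime.prod_left h).coprime_dvd_left (Finset.lcm_dvd fun _ => Finset.dvd_prod_of_mem id)

theorem hasLogDensity_dvd_inter_modEq {m L : ℕ} (h : m.Coprime L) (s : ℤ) :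
    HasLogDensity ({k | (m : ℤ) ∣ k} ∩ {k | k ≡ s [ZMOD L]}) (1 / m * (1 / L)) := by
  obtain ⟨u, v, huv⟩ := Nat.isCoprime_iff_coprime.2 h
  have hcrt : {k | (m : ℤ) ∣ k} ∩ {k | k ≡ s [ZMOD L]} =
      {k | k ≡ u * m * s [ZMOD (m * L : ℕ)]} := by
    have hm : u * m * s ≡ 0 [ZMOD m] :=
      Int.modEq_zero_iff_dvd.2 ((Dvd.intro_left u rfl).mul_right s)
    have hL : u * m * s ≡ s [ZMOD L] :=
      Int.modEq_iff_dvd.2 ⟨v * s, by linear_combination (-s) * huv⟩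
    ext k
    rw [Nat.cast_mul]
    simp only [mem_inter_iff, mem_ofPred_eq, ← Int.modEq_zero_iff_dvd,
      ← Int.modEq_and_modEq_iff_modEq_mul (m := (m : ℤ)) (n := L) h]
    exact and_congr ⟨fun hk => hk.trans hm.symm, fun hk => hk.trans hm⟩
      ⟨fun hk => hk.trans hL.symm, fun hk => hk.trans hL⟩
  rw [hcrt, one_div_mul_one_div, ← Nat.cast_mul]
  exact hasLogDensity_modEq _ _

theorem hasLogDensity_multiplesZ_inter_modEq {S : Finset ℕ} {L : ℕ} (h : ∀ b ∈ S, b.Coprime L)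
    (s : ℤ) : HasLogDensity (multiplesZ S ∩ {k | k ≡ s [ZMOD L]}) (multiplesDensity S * (1 / L)) :=
  hasLogDensity_multiplesZ_inter fun _ hT =>
    hasLogDensity_dvd_inter_modEq (coprime_lcm_left fun b hb => h b (hT hb)) s

theorem hasLogDensity_multiplesZ_inter_multiplesZ {S T : Finset ℕ}
    (h : ∀ b ∈ S, ∀ c ∈ T, b.Coprime c) :
    HasLogDensity (multiplesZ S ∩ multiplesZ T) (multiplesDensity S * multiplesDensity T) := by
  refine hasLogDensity_multiplesZ_inter fun S' hS' => ?_
  rw [inter_comm, mul_comm]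
  refine hasLogDensity_multiplesZ_inter fun T' hT' => ?_
  have hcoprime : (S'.lcm id).Coprime (T'.lcm id) :=
    coprime_lcm_left fun b hb => (coprime_lcm_left fun c hc => (h b (hS' hb) c (hT' hc)).symm).symm
  have hmul : {k : ℤ | ((T'.lcm id : ℕ) : ℤ) ∣ k} ∩ {k : ℤ | ((S'.lcm id : ℕ) : ℤ) ∣ k} =
      {k : ℤ | ((T'.lcm id * S'.lcm id : ℕ) : ℤ) ∣ k} := by
    ext k
    rw [← hcoprime.symm.lcm_eq_mul]
    simp only [mem_inter_iff, mem_ofPred_eq, Int.natCast_dvd, Nat.lcm_dvd_iff]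
  rw [hmul, one_div_mul_one_div, ← Nat.cast_mul]
  exact hasLogDensity_dvd _

theorem one_sub_multiplesDensity_union {S T : Finset ℕ} (h : ∀ b ∈ S, ∀ c ∈ T, b.Coprime c) :
    1 - multiplesDensity (S ∪ T) = (1 - multiplesDensity S) * (1 - multiplesDensity T) := by
  have hunion := (hasLogDensity_multiplesZ_finset S).union (hasLogDensity_multiplesZ_finset T)
    (hasLogDensity_multiplesZ_inter_multiplesZ h)
  rw [← multiplesZ_union, ← Finset.coe_union] at hunion
  rw [← logDensLow_multiplesZ_finset, hunion.logDensLow_eq]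
  ring

theorem hasSum_smoothNumbers_inv (N : ℕ) :
    HasSum (N.smoothNumbers.indicator fun k => (k : ℝ)⁻¹)
      (∏ p ∈ N.primesBelow, (1 - (p : ℝ)⁻¹)⁻¹) := by
  let f : ℕ →* ℝ := (invMonoidWithZeroHom (G₀ := ℝ)).toMonoidHom.comp (Nat.castRingHom ℝ)
  have hf {p : ℕ} (hp : p.Prime) : ‖f p‖ < 1 := by
    change ‖(p : ℝ)⁻¹‖ < 1
    rw [norm_inv, Real.norm_natCast]
    exact inv_lt_one_of_one_lt₀ (mod_cast hp.one_lt)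
  exact hasSum_subtype_iff_indicator.1
    (EulerProduct.summable_and_hasSum_smoothNumbers_prod_primesBelow_geometric hf N).2

theorem hasSum_smoothNumbers_dvd {N m : ℕ} (hm : m ∈ N.smoothNumbers) :
    HasSum ({k : ℕ | m ∣ k ∧ k ∈ N.smoothNumbers}.indicator fun k => (k : ℝ)⁻¹)
      (1 / m * ∏ p ∈ N.primesBelow, (1 - (p : ℝ)⁻¹)⁻¹) := by
  have hm0 : m ≠ 0 := Nat.ne_zero_of_mem_smoothNumbers hm
  have hmem (j : ℕ) : m * j ∈ N.smoothNumbers ↔ j ∈ N.smoothNumbers :=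
    ⟨fun h => Nat.mem_smoothNumbers_of_dvd h (Dvd.intro_left m rfl), Nat.mul_mem_smoothNumbers hm⟩
  refine ((mul_right_injective₀ hm0).hasSum_iff fun k hk => ?_).1 ?_
  · exact indicator_of_notMem (fun hmk => hk (hmk.1.imp fun _ => Eq.symm)) _
  · refine ((hasSum_smoothNumbers_inv N).mul_left (1 / m : ℝ)).congr_fun fun j => ?_
    simp only [Function.comp_apply, indicator_apply, mem_ofPred_eq, hmem, dvd_mul_right, true_and,
      Nat.cast_mul, mul_inv, mul_ite, mul_zero, one_div]

theorem lcm_mem_smoothNumbers {N : ℕ} {S : Finset ℕ} (hS : ∀ b ∈ S, b ∈ N.smoothNumbers) :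
    S.lcm id ∈ N.smoothNumbers := by
  refine Nat.mem_smoothNumbers'.2 fun p hp hdvd => ?_
  obtain ⟨b, hb, hpb⟩ := (hp.prime.dvd_finsetProd_iff id).1 (hdvd.trans (Finset.lcm_dvd_prod S id))
  exact Nat.mem_smoothNumbers'.1 (hS b hb) p hp hpb

theorem hasSum_smoothNumbers_multiplesZ {N : ℕ} {S : Finset ℕ}
    (hS : ∀ b ∈ S, b ∈ N.smoothNumbers) :
    HasSum ({k : ℕ | (k : ℤ) ∈ multiplesZ S ∧ k ∈ N.smoothNumbers}.indicator fun k => (k : ℝ)⁻¹)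
      (multiplesDensity S * ∏ p ∈ N.primesBelow, (1 - (p : ℝ)⁻¹)⁻¹) := by
  rw [multiplesDensity, Finset.sum_mul]
  simp only [mul_assoc]
  refine (hasSum_sum fun T hT => (hasSum_smoothNumbers_dvd (lcm_mem_smoothNumbers fun b hb =>
    hS b (Finset.mem_powerset.1 (Finset.mem_filter.1 hT).1 hb))).mul_left _).congr_fun fun k => ?_
  have h := indicator_multiplesZ S (fun _ => N.smoothNumbers.indicator (fun k => (k : ℝ)⁻¹) k) k
  simpa only [indicator_apply, mem_ofPred_eq, Int.natCast_dvd_natCast, ite_and] using h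

/-! ### The Davenport–Erdős theorem -/

theorem logWeight_multiplesZ_sdiff_le {n : ℕ} {S T : Finset ℕ} (hST : S ⊆ T)
    (hT : ∀ b ∈ T, b ∈ (n + 1).smoothNumbers) :
    logWeight (multiplesZ T \ multiplesZ S) n ≤ (Real.log n)⁻¹ *
      ((multiplesDensity T - multiplesDensity S) * ∏ p ∈ n.primesLE, (1 - (p : ℝ)⁻¹)⁻¹) := by
  have hsum := (hasSum_smoothNumbers_multiplesZ hT).sub
    (hasSum_smoothNumbers_multiplesZ fun b hb => hT b (hST hb))
  rw [← sub_mul] at hsum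
  refine mul_le_mul_of_nonneg_left ?_ (inv_nonneg.2 (Real.log_natCast_nonneg n))
  have hsub : {k : ℕ | (k : ℤ) ∈ multiplesZ S ∧ k ∈ (n + 1).smoothNumbers} ⊆
      {k : ℕ | (k : ℤ) ∈ multiplesZ T ∧ k ∈ (n + 1).smoothNumbers} :=
    fun k hk => ⟨multiplesZ_mono (Finset.coe_subset.2 hST) hk.1, hk.2⟩
  refine le_trans (Finset.sum_le_sum fun k hk => ?_) (sum_le_hasSum (Finset.Icc 1 n)
    (fun k _ => sub_nonneg.2 (indicator_le_indicator_of_subset hsub (fun _ => by positivity) k))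
    hsum)
  have hsmooth : k ∈ (n + 1).smoothNumbers := by
    rw [Finset.mem_Icc] at hk
    exact Nat.mem_smoothNumbers_of_lt hk.1 (Nat.lt_succ_of_le hk.2)
  rw [indicator_sdiff (multiplesZ_mono (Finset.coe_subset.2 hST))]
  simp only [Pi.sub_apply, indicator_apply, mem_ofPred_eq, hsmooth, and_true, Int.cast_natCast,
    le_refl]

-- Up to `n`, only the elements of `A` below `n` matter, and all integers up to `n` are
-- `(n + 1)`-smooth: the smooth densities are compared exactly, losing only Mertens' constant.
theorem exists_eventually_logWeight_multiplesZ_sdiff_le {A : Set ℕ} (h0 : 0 ∉ A) {D : ℝ}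
    (hD : ∀ S : Finset ℕ, (S : Set ℕ) ⊆ A → multiplesDensity S ≤ D) :
    ∃ C : ℝ, ∀ S : Finset ℕ, (S : Set ℕ) ⊆ A → ∀ᶠ n in atTop,
      logWeight (multiplesZ A \ multiplesZ S) n ≤ C * (D - multiplesDensity S) := by
  obtain ⟨C, hC⟩ := exists_prod_primesLE_inv_le_mul_log
  refine ⟨C, fun S hS => ?_⟩
  filter_upwards [hC, eventually_ge_atTop (S.sup id), eventually_gt_atTop 1] with n hn hSn hn1
  have hlog : 0 < Real.log n := Real.log_pos (mod_cast hn1)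
  have hpos {b : ℕ} (hb : b ∈ A) : 0 < b := Nat.pos_of_ne_zero (ne_of_mem_of_not_mem hb h0)
  let T : Finset ℕ := {b ∈ Finset.Icc 1 n | b ∈ A}
  have hTA : (T : Set ℕ) ⊆ A := fun b hb => (Finset.mem_filter.1 hb).2
  have hST : S ⊆ T := fun b hb => Finset.mem_filter.2
    ⟨Finset.mem_Icc.2 ⟨hpos (hS hb), (Finset.le_sup (f := id) hb).trans hSn⟩, hS hb⟩
  have hT (b : ℕ) (hb : b ∈ T) : b ∈ (n + 1).smoothNumbers :=
    Nat.mem_smoothNumbers_of_lt (hpos (hTA hb))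
      (Nat.lt_succ_of_le (Finset.mem_Icc.1 (Finset.mem_filter.1 hb).1).2)
  have htruncate : logWeight (multiplesZ A \ multiplesZ S) n ≤
      logWeight (multiplesZ T \ multiplesZ S) n := by
    refine logWeight_le_of_forall_le fun k hk hkn ⟨⟨b, hb, hbk⟩, hkS⟩ => ⟨⟨b, ?_, hbk⟩, hkS⟩
    have hbn : b ≤ n := (Nat.le_of_dvd hk (Int.natCast_dvd_natCast.1 hbk)).trans hkn
    exact Finset.mem_filter.2 ⟨Finset.mem_Icc.2 ⟨hpos hb, hbn⟩, hb⟩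
  have hdens : 0 ≤ D - multiplesDensity S := sub_nonneg.2 (hD S hS)
  calc logWeight (multiplesZ A \ multiplesZ S) n
      ≤ (Real.log n)⁻¹ *
          ((multiplesDensity T - multiplesDensity S) * ∏ p ∈ n.primesLE, (1 - (p : ℝ)⁻¹)⁻¹) :=
        htruncate.trans (logWeight_multiplesZ_sdiff_le hST hT)
    _ ≤ (Real.log n)⁻¹ * ((D - multiplesDensity S) * (C * Real.log n)) := by
        gcongr
        · exact Finset.prod_nonneg fun p _ => inv_nonneg.2 (sub_nonneg.2 p.cast_inv_le_one)
        · exact hD T hTA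
    _ = C * (D - multiplesDensity S) := by field_simp

theorem logDensUp_multiplesZ_inter_le_of_isLUB {A : Set ℕ} (h0 : 0 ∉ A) {D : ℝ}
    (hD : IsLUB (multiplesDensity '' {S | (S : Set ℕ) ⊆ A}) D) {E : Set ℤ} {c : ℝ}
    (hE : ∀ S : Finset ℕ, (S : Set ℕ) ⊆ A → logDensUp (multiplesZ S ∩ E) ≤ c * multiplesDensity S) :
    logDensUp (multiplesZ A ∩ E) ≤ c * D := by
  obtain ⟨C, hC⟩ := exists_eventually_logWeight_multiplesZ_sdiff_le h0
    fun S hS => hD.1 (mem_image_of_mem _ hS)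
  have happrox (d : ℝ) (hd : d ∈ multiplesDensity '' {S | (S : Set ℕ) ⊆ A}) :
      logDensUp (multiplesZ A ∩ E) ≤ c * d + C * (D - d) := by
    obtain ⟨S, hS, rfl⟩ := hd
    have hcover : multiplesZ A ∩ E ⊆ multiplesZ S ∩ E ∪ multiplesZ A \ multiplesZ S :=
      fun k hk => (em (k ∈ multiplesZ S)).imp (fun h => ⟨h, hk.2⟩) fun h => ⟨hk.1, h⟩
    refine (logDensUp_mono hcover).trans ((logDensUp_union_le _ _).trans
      (add_le_add (hE S hS) ?_))
    exact limsup_le_of_le (isBoundedUnder_ge_logWeight _).isCoboundedUnder_le (hC S hS)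
  have hclosed : IsClosed {d | logDensUp (multiplesZ A ∩ E) ≤ c * d + C * (D - d)} :=
    isClosed_le (by fun_prop) (by fun_prop)
  have hmem : logDensUp (multiplesZ A ∩ E) ≤ c * D + C * (D - D) :=
    closure_minimal happrox hclosed (hD.mem_closure ⟨_, ∅, by simp, rfl⟩)
  simpa only [sub_self, mul_zero, add_zero] using hmem

theorem logDensUp_multiplesZ_le_of_isLUB {A : Set ℕ} (h0 : 0 ∉ A) {D : ℝ}
    (hD : IsLUB (multiplesDensity '' {S | (S : Set ℕ) ⊆ A}) D) : logDensUp (multiplesZ A) ≤ D := by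
  simpa only [inter_univ, one_mul] using
    logDensUp_multiplesZ_inter_le_of_isLUB h0 hD (E := univ) (c := 1) fun S _ => by
      rw [inter_univ, one_mul, (hasLogDensity_multiplesZ_finset S).logDensUp_eq]

theorem isLUB_multiplesDensity {A : Set ℕ} (h0 : 0 ∉ A) :
    IsLUB (multiplesDensity '' {S | (S : Set ℕ) ⊆ A}) (logDensLow (multiplesZ A)) := by
  have hbound : logDensLow (multiplesZ A) ∈
      upperBounds (multiplesDensity '' {S | (S : Set ℕ) ⊆ A}) := by
    rintro - ⟨S, hS, rfl⟩
    exact multiplesDensity_le_logDensLow hS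
  have hsup := isLUB_csSup (s := multiplesDensity '' {S | (S : Set ℕ) ⊆ A})
    ⟨_, ∅, by simp, rfl⟩ ⟨_, hbound⟩
  have hle := (logDensLow_le_logDensUp _).trans (logDensUp_multiplesZ_le_of_isLUB h0 hsup)
  rwa [hle.antisymm (hsup.2 hbound)]

/-- The **Davenport–Erdős theorem**. -/
theorem hasLogDensity_multiplesZ {A : Set ℕ} (h0 : 0 ∉ A) :
    HasLogDensity (multiplesZ A) (logDensLow (multiplesZ A)) :=
  tendsto_of_liminf_eq_limsup rfl
    ((logDensUp_multiplesZ_le_of_isLUB h0 (isLUB_multiplesDensity h0)).antisymm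
      (logDensLow_le_logDensUp _))
    (isBoundedUnder_le_logWeight _) (isBoundedUnder_ge_logWeight _)

theorem logDensUp_multiplesZ_inter_modEq_le {A : Set ℕ} (h0 : 0 ∉ A) {L : ℕ}
    (hL : ∀ a ∈ A, a.Coprime L) (s : ℤ) :
    logDensUp (multiplesZ A ∩ {k | k ≡ s [ZMOD L]}) ≤ 1 / L * logDensLow (multiplesZ A) :=
  logDensUp_multiplesZ_inter_le_of_isLUB h0 (isLUB_multiplesDensity h0) fun S hS => by
    rw [(hasLogDensity_multiplesZ_inter_modEq (fun b hb => hL b (hS hb)) s).logDensUp_eq, mul_comm]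

theorem logDensLow_multiplesZ_mem_of_isClosed {A : Set ℕ} (h0 : 0 ∉ A) {s : Set ℝ}
    (hs : IsClosed s) (h : ∀ S : Finset ℕ, (S : Set ℕ) ⊆ A → multiplesDensity S ∈ s) :
    logDensLow (multiplesZ A) ∈ s :=
  closure_minimal (image_subset_iff.2 h) hs
    ((isLUB_multiplesDensity h0).mem_closure ⟨_, ∅, by simp, rfl⟩)

/-! ### Behrend and taut sets -/

theorem logDensLow_multiplesZ_le_sdiff_singleton_add {B C : Set ℕ} (hB : 0 ∉ B) (hC : 0 ∉ C)
    {b d : ℕ} (hd : 0 < d) (hdb : d ∣ b)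
    (hBC : ∀ c ∈ C, ((d * c : ℕ) : ℤ) ∈ multiplesZ (B \ {b})) :
    logDensLow (multiplesZ B) ≤
      logDensLow (multiplesZ (B \ {b})) + 1 / d * (1 - logDensLow (multiplesZ C)) := by
  have hcover : multiplesZ B ⊆ multiplesZ (B \ {b}) ∪ ((d : ℤ) * ·) '' (multiplesZ C)ᶜ := by
    rintro k ⟨b', hb', hbk⟩
    refine or_iff_not_imp_left.2 fun hk => ?_
    obtain rfl : b' = b := by_contra fun hne => hk ⟨b', ⟨hb', hne⟩, hbk⟩
    obtain ⟨z, rfl⟩ := (Int.natCast_dvd_natCast.2 hdb).trans hbk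
    refine ⟨z, fun ⟨c, hc, hcz⟩ => hk ?_, rfl⟩
    obtain ⟨b'', hb'', hdvd⟩ := hBC c hc
    exact ⟨b'', hb'', hdvd.trans (by rw [Nat.cast_mul]; exact mul_dvd_mul_left _ hcz)⟩
  refine le_of_tendsto_of_tendsto' (hasLogDensity_multiplesZ hB)
    (Tendsto.add (hasLogDensity_multiplesZ fun h => hB h.1)
      ((hasLogDensity_multiplesZ hC).compl.const_mul (1 / d : ℝ))) fun n => ?_
  exact (logWeight_mono hcover n).trans ((logWeight_union_le _ _ n).trans
    (add_le_add_right (logWeight_image_mul_le hd _ n) _))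

theorem IsBehrend.sdiff_singleton {A : Set ℕ} (hA : IsBehrend A) (h0 : 0 ∉ A) {a : ℕ}
    (ha : 2 ≤ a) : IsBehrend (A \ {a}) := by
  have hle := logDensLow_multiplesZ_le_sdiff_singleton_add h0 (C := A \ {a}) (fun h => h0 h.1)
    (by omega) dvd_rfl fun c hc => ⟨c, hc, Int.natCast_dvd_natCast.2 (Dvd.intro_left a rfl)⟩
  rw [show logDensLow (multiplesZ A) = 1 from hA] at hle
  have ha' : (1 : ℝ) / a ≤ 1 / 2 := one_div_le_one_div_of_le two_pos (mod_cast ha)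
  have hle_one := logDensLow_le_one (multiplesZ (A \ {a}))
  exact hle_one.antisymm (by nlinarith)

theorem not_isBehrend_empty : ¬ IsBehrend ∅ := by
  simp [IsBehrend, multiplesZ, hasLogDensity_empty.logDensLow_eq]

/-- The set of cofactors `a` of the multiples `d * a ∈ B` of `d`. When `d` divides a whole
residue class, these elements of `B` meet the class only in multiples of their cofactors. -/
def cofactors (B : Set ℕ) (d : ℕ) : Set ℕ := {a | d * a ∈ B}

theorem zero_notMem_cofactors {B : Set ℕ} (h0 : 0 ∉ B) (d : ℕ) : 0 ∉ cofactors B d := h0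

theorem IsTaut.not_isBehrend_cofactors {B : Set ℕ} (htaut : IsTaut B) (h0 : 0 ∉ B) {d : ℕ}
    (hd : d ∉ B) : ¬ IsBehrend (cofactors B d) := by
  intro hbehrend
  obtain ⟨a, ha⟩ : (cofactors B d).Nonempty :=
    nonempty_iff_ne_empty.2 fun h => not_isBehrend_empty (h ▸ hbehrend)
  have hda : d * a ≠ 0 := ne_of_mem_of_not_mem ha h0
  have hd0 : 0 < d := Nat.pos_of_ne_zero (left_ne_zero_of_mul hda)
  have ha0 : a ≠ 0 := right_ne_zero_of_mul hda
  have ha1 : a ≠ 1 := by rintro rfl; exact hd (mul_one d ▸ ha)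
  have hC : 0 ∉ cofactors B d := zero_notMem_cofactors h0 d
  have hle := logDensLow_multiplesZ_le_sdiff_singleton_add h0 (C := cofactors B d \ {a})
    (fun h => hC h.1) hd0 (dvd_mul_right d a) fun c hc =>
      ⟨d * c, ⟨hc.1, fun h => hc.2 (Nat.eq_of_mul_eq_mul_left hd0 h)⟩, dvd_rfl⟩
  rw [hbehrend.sdiff_singleton hC (by omega), sub_self, mul_zero, add_zero] at hle
  exact (htaut _ ha).not_ge hle

theorem Btilde_antitone (A : Set ℕ) : Antitone (Btilde A) :=
  fun _ _ hMN _ hb => ⟨hb.1, fun p hp hpb => hMN.trans_lt (hb.2 p hp hpb)⟩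

theorem coprime_of_le_of_mem_Btilde {A : Set ℕ} {N b c : ℕ} (hb0 : b ≠ 0) (hb : b ≤ N)
    (hc : c ∈ Btilde A N) : b.Coprime c :=
  Nat.coprime_of_dvd fun p hp hpb hpc =>
    ((hc.2 p hp hpc).trans_le ((Nat.le_of_dvd (Nat.pos_of_ne_zero hb0) hpb).trans hb)).false

theorem one_sub_logDensLow_multiplesZ_le {A : Set ℕ} (h0 : 0 ∉ A) {S : Finset ℕ}
    (hS : (S : Set ℕ) ⊆ A) :
    1 - logDensLow (multiplesZ A) ≤
      (1 - multiplesDensity S) * (1 - logDensLow (multiplesZ (Btilde A (S.sup id)))) := by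
  refine logDensLow_multiplesZ_mem_of_isClosed (A := Btilde A (S.sup id)) (fun h => h0 h.1)
    (s := {t | 1 - logDensLow (multiplesZ A) ≤ (1 - multiplesDensity S) * (1 - t)})
    (isClosed_le (by fun_prop) (by fun_prop)) fun T hT => ?_
  have hcoprime (b : ℕ) (hb : b ∈ S) (c : ℕ) (hc : c ∈ T) : b.Coprime c :=
    coprime_of_le_of_mem_Btilde (ne_of_mem_of_not_mem (hS hb) h0) (Finset.le_sup (f := id) hb)
      (hT hc)
  rw [mem_ofPred_eq, ← one_sub_multiplesDensity_union hcoprime]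
  refine sub_le_sub_left (multiplesDensity_le_logDensLow ?_) 1
  rw [Finset.coe_union]
  exact union_subset hS fun c hc => (hT hc).1

theorem tendsto_logDensLow_multiplesZ_Btilde {A : Set ℕ} (h0 : 0 ∉ A) (hA : ¬ IsBehrend A) :
    Tendsto (fun N => logDensLow (multiplesZ (Btilde A N))) atTop (𝓝 0) := by
  let f (N : ℕ) : ℝ := logDensLow (multiplesZ (Btilde A N))
  have hbdd : BddBelow (range f) := ⟨0, forall_mem_range.2 fun N => logDensLow_nonneg _⟩
  have hf : Tendsto f atTop (𝓝 (⨅ N, f N)) := tendsto_atTop_ciInf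
    (fun M N hMN => logDensLow_mono (multiplesZ_mono (Btilde_antitone A hMN))) hbdd
  have hclosed := logDensLow_multiplesZ_mem_of_isClosed h0
    (s := {t | 1 - logDensLow (multiplesZ A) ≤ (1 - t) * (1 - ⨅ N, f N)})
    (isClosed_le (by fun_prop) (by fun_prop)) fun S hS =>
      (one_sub_logDensLow_multiplesZ_le h0 hS).trans <| mul_le_mul_of_nonneg_left
        (sub_le_sub_left (ciInf_le hbdd _) 1)
        (sub_nonneg.2 (logDensLow_multiplesZ_finset S ▸ logDensLow_le_one _))
  have hlt : logDensLow (multiplesZ A) < 1 := (logDensLow_le_one _).lt_of_ne hA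
  have hnonneg : 0 ≤ ⨅ N, f N := le_ciInf fun N => logDensLow_nonneg _
  have hzero : ⨅ N, f N = 0 := hnonneg.antisymm' (by
    change 1 - logDensLow (multiplesZ A) ≤ (1 - logDensLow (multiplesZ A)) * (1 - ⨅ N, f N)
      at hclosed
    nlinarith)
  rwa [hzero] at hf

/-! ### Free numbers in residue classes -/

theorem exists_coprime_cofactor_of_dvd_of_modEq_sq {M b : ℕ} {x y : ℤ} (hM : M ≠ 0)
    (hxM : x ∣ M) (hyx : y ≡ x [ZMOD (M ^ 2 : ℕ)]) (hby : (b : ℤ) ∣ y) :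
    ∃ d a : ℕ, b = d * a ∧ (d : ℤ) ∣ x ∧ a.Coprime (M ^ 2) := by
  have hdM : b.gcd (M ^ 2) ∣ M ^ 2 := Nat.gcd_dvd_right b (M ^ 2)
  obtain ⟨a, ha⟩ := Nat.gcd_dvd_left b (M ^ 2)
  have hdx : ((b.gcd (M ^ 2) : ℕ) : ℤ) ∣ x :=
    ((hyx.of_dvd (Int.natCast_dvd_natCast.2 hdM)).dvd_iff).1
      ((Int.natCast_dvd_natCast.2 ⟨a, ha⟩).trans hby)
  refine ⟨b.gcd (M ^ 2), a, ha, hdx, Nat.coprime_of_dvd fun p hp hpa hpM => ?_⟩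
  -- The square leaves room for `p * d`: `d ∣ x ∣ M` and `p ∣ M`.
  have hdvd : p * b.gcd (M ^ 2) ∣ b.gcd (M ^ 2) := by
    refine Nat.dvd_gcd ?_ ?_
    · conv_rhs => rw [ha, mul_comm]
      exact mul_dvd_mul_right hpa _
    · exact (mul_dvd_mul (hp.dvd_of_dvd_pow hpM)
        (Int.natCast_dvd_natCast.1 (hdx.trans hxM))).trans (sq M).symm.dvd
  have hpos : 0 < b.gcd (M ^ 2) := Nat.gcd_pos_of_pos_right b (by positivity)
  exact hp.one_lt.not_ge (le_of_mul_le_mul_right (by simpa using Nat.le_of_dvd hpos hdvd) hpos)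

theorem mem_Btilde_of_coprime {A : Set ℕ} {a N L : ℕ} (ha : a ∈ A) (hN : N.factorial ∣ L)
    (haL : a.Coprime L) : a ∈ Btilde A N :=
  ⟨ha, fun _ hp hpa => not_le.1 fun hpN =>
    Nat.not_coprime_of_dvd_of_dvd hp.one_lt hpa ((hp.dvd_factorial.2 hpN).trans hN) haL⟩

theorem multiplesZ_inter_modEq_subset_biUnion {B : Set ℕ} {x : ℤ} {N : ℕ} (hx : x ∈ freeZ B)
    (hxN : x.natAbs ≤ N) :
    multiplesZ B ∩ {y | y ≡ x [ZMOD (N.factorial ^ 2 : ℕ)]} ⊆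
      ⋃ d ∈ x.natAbs.divisors,
        multiplesZ {a ∈ Btilde (cofactors B d) N | a.Coprime (N.factorial ^ 2)} ∩
          {y | y ≡ x [ZMOD (N.factorial ^ 2 : ℕ)]} := by
  rintro y ⟨⟨b, hb, hby⟩, hyx⟩
  have hx0 : x ≠ 0 := by rintro rfl; exact hx ⟨b, hb, dvd_zero _⟩
  have hxfact : x ∣ N.factorial :=
    Int.natAbs_dvd.1 (Int.natCast_dvd_natCast.2 (Nat.dvd_factorial (Int.natAbs_pos.2 hx0) hxN))
  obtain ⟨d, a, rfl, hdx, hcop⟩ :=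
    exists_coprime_cofactor_of_dvd_of_modEq_sq N.factorial_ne_zero hxfact hyx hby
  have hay : (a : ℤ) ∣ y := (Int.natCast_dvd_natCast.2 (dvd_mul_left a d)).trans hby
  exact mem_biUnion (Nat.mem_divisors.2 ⟨Int.natCast_dvd.1 hdx, Int.natAbs_ne_zero.2 hx0⟩)
    ⟨⟨a, ⟨mem_Btilde_of_coprime hb (dvd_pow_self _ two_ne_zero) hcop, hcop⟩, hay⟩, hyx⟩

theorem logDensUp_multiplesZ_inter_modEq_le_sum {B : Set ℕ} (h0 : 0 ∉ B) {x : ℤ} {N : ℕ}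
    (hx : x ∈ freeZ B) (hxN : x.natAbs ≤ N) :
    logDensUp (multiplesZ B ∩ {y | y ≡ x [ZMOD (N.factorial ^ 2 : ℕ)]}) ≤
      1 / (N.factorial ^ 2 : ℕ) *
        ∑ d ∈ x.natAbs.divisors, logDensLow (multiplesZ (Btilde (cofactors B d) N)) := by
  refine (logDensUp_mono (multiplesZ_inter_modEq_subset_biUnion hx hxN)).trans
    ((logDensUp_biUnion_le _ _).trans ?_)
  rw [Finset.mul_sum]
  refine Finset.sum_le_sum fun d _ => ?_
  refine (logDensUp_multiplesZ_inter_modEq_le (fun h => zero_notMem_cofactors h0 d h.1.1)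
    (fun a ha => ha.2) x).trans ?_
  gcongr
  exact logDensLow_mono (multiplesZ_mono fun a ha => ha.1)

theorem eventually_logDensUp_multiplesZ_inter_modEq_le {B : Set ℕ} (htaut : IsTaut B)
    (h0 : 0 ∉ B) {x : ℤ} (hx : x ∈ freeZ B) {ε : ℝ} (hε : 0 < ε) :
    ∀ᶠ N : ℕ in atTop,
      logDensUp (multiplesZ B ∩ {y | y ≡ x [ZMOD (N.factorial ^ 2 : ℕ)]}) ≤
        1 / (N.factorial ^ 2 : ℕ) * ε := by
  have hsum : Tendsto (fun N => ∑ d ∈ x.natAbs.divisors,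
      logDensLow (multiplesZ (Btilde (cofactors B d) N))) atTop (𝓝 0) := by
    rw [← Finset.sum_const_zero (s := x.natAbs.divisors)]
    refine tendsto_finsetSum _ fun d hd => tendsto_logDensLow_multiplesZ_Btilde
      (zero_notMem_cofactors h0 d) (htaut.not_isBehrend_cofactors h0 fun hdB => ?_)
    exact hx ⟨d, hdB, Int.natCast_dvd.2 (Nat.dvd_of_mem_divisors hd)⟩
  filter_upwards [hsum.eventually_le_const hε, eventually_ge_atTop x.natAbs] with N hN hxN
  exact (logDensUp_multiplesZ_inter_modEq_le_sum h0 hx hxN).trans (by gcongr)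

theorem eventually_modEq_subset_multiplesZ {B : Set ℕ} (h0 : 0 ∉ B) {x : ℤ}
    (hx : x ∈ multiplesZ B) :
    ∀ᶠ N : ℕ in atTop, {y | y ≡ x [ZMOD (N.factorial ^ 2 : ℕ)]} ⊆ multiplesZ B := by
  obtain ⟨b, hb, hbx⟩ := hx
  filter_upwards [eventually_ge_atTop b] with N hbN y hyx
  have hb0 : 0 < b := Nat.pos_of_ne_zero (ne_of_mem_of_not_mem hb h0)
  have hbL : b ∣ N.factorial ^ 2 := (Nat.dvd_factorial hb0 hbN).pow two_ne_zero
  exact ⟨b, hb, ((hyx.of_dvd (Int.natCast_dvd_natCast.2 hbL)).dvd_iff).2 hbx⟩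

theorem eventually_logDensUp_not_freeZ_iff_le {B : Set ℕ} (htaut : IsTaut B) (h0 : 0 ∉ B) (x : ℤ)
    {ε : ℝ} (hε : 0 < ε) :
    ∀ᶠ N : ℕ in atTop,
      logDensUp {y | y ≡ x [ZMOD (N.factorial ^ 2 : ℕ)] ∧ ¬ (y ∈ freeZ B ↔ x ∈ freeZ B)} ≤
        1 / (N.factorial ^ 2 : ℕ) * ε := by
  by_cases hx : x ∈ freeZ B
  · refine (eventually_logDensUp_multiplesZ_inter_modEq_le htaut h0 hx hε).mono fun N hN => ?_
    refine (logDensUp_mono fun y hy => ?_).trans hN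
    exact ⟨not_not.1 fun hyB => hy.2 (iff_of_true hyB hx), hy.1⟩
  · refine (eventually_modEq_subset_multiplesZ h0 (notMem_compl_iff.1 hx)).mono fun N hN => ?_
    refine (logDensUp_mono (A' := ∅) fun y hy => ?_).trans
      (logDensUp_empty.trans_le (by positivity))
    exact hy.2 (iff_of_false (notMem_compl_iff.2 (hN hy.1)) hx)

/-- If `B` is taut, then every finite block of `η` (the indicator of the `B`-free numbers)
occurs in `η` along a set of strictly positive lower logarithmic density; this expresses
that the Mirsky measure has full topological support in `X_η`. -/
theorem block_of_eta_positive_frequency (B : Set ℕ) (hB0 : 0 ∉ B) (hprim : Primitive B)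
    (htaut : IsTaut B) (r : ℤ) (n : ℕ) (hn : 0 < n) :
    0 < logDensLow {k : ℤ | 0 ≤ k ∧
        ∀ i ∈ Finset.Icc 1 n, ((k + (i : ℤ)) ∈ freeZ B ↔ (r + (i : ℤ)) ∈ freeZ B)} := by
  obtain ⟨N, hN⟩ := ((Filter.eventually_all_finset _).2 fun i (_ : i ∈ Finset.Icc 1 n) =>
    eventually_logDensUp_not_freeZ_iff_le htaut hB0 (r + i) (n.one_div_pos_of_nat (α := ℝ))).exists
  set L : ℕ := N.factorial ^ 2
  let G : Set ℤ := {k | ∀ i ∈ Finset.Icc 1 n, (k + i ∈ freeZ B ↔ r + i ∈ freeZ B)}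
  let E (i : ℕ) : Set ℤ := {y | y ≡ r + i [ZMOD L] ∧ ¬ (y ∈ freeZ B ↔ r + i ∈ freeZ B)}
  have hcover : {k | k ≡ r [ZMOD L]} ⊆ G ∪ ⋃ i ∈ Finset.Icc 1 n, {k | k + (i : ℤ) ∈ E i} :=
    fun k hk => or_iff_not_imp_right.2 fun hkE i hi => not_not.1 fun hne =>
      hkE (mem_biUnion hi ⟨hk.add_right i, hne⟩)
  have hE : ∑ i ∈ Finset.Icc 1 n, logDensUp {k | k + (i : ℤ) ∈ E i} < 1 / L := calc
    _ ≤ ∑ i ∈ Finset.Icc 1 n, (1 / L * (1 / (n + 1)) : ℝ) :=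
      Finset.sum_le_sum fun i hi => (logDensUp_shift (E i) i).trans_le (hN i hi)
    _ = 1 / L * (n / (n + 1)) := by
      rw [Finset.sum_const, Nat.card_Icc, add_tsub_cancel_right, nsmul_eq_mul]
      ring
    _ < 1 / L := mul_lt_of_lt_one_right (by positivity) ((div_lt_one (by positivity)).2 (by simp))
  have hG := logDensLow_le_add_sum_logDensUp hcover
  rw [(hasLogDensity_modEq L r).logDensLow_eq] at hG
  exact (pos_of_lt_add_left (hE.trans_le hG)).trans_le
    (logDensLow_mono_of_pos fun k hk hkG => ⟨hk.le, hkG⟩)
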